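/- Let ρ = |ψ⟩⟨ψ| be an n-qubit pure state and S ⊆ Fin n nonempty with |S| = s. Fix K ≥ 2 and L ≥ 1. Consider the following random experiment: U₁, …, U_L are i.i.d., each U_l = ⊗_{i∈S} U_{l,i} with (U_{l,i}) independent Haar-random elements of U(2); conditionally on U_l, the outcomes Z_{l,1}, …, Z_{l,K} are i.i.d. with values in {0,1}^S and law P_{U_l}(z) = tr(U_l ρ U_l† |z⟩⟨z|). Define Ŝ_l^(K) = (1/(K(K−1))) Σ_{k ≠ k'} 1{Z_{l,k} = Z_{l,k'}} and Ĉ = 1 − (3/2)^s · (1/L) Σ_{l=1}^L Ŝ_l^(K). Then: (i) E[Ĉ] = C_ψ(S) (the estimator is unbiased); and (ii) for any ε > 0 and δ ∈ (0,1), if L ≥ ⌈(9/4)^s · log(2/δ) / (2ε²)⌉ then P(|Ĉ − C_ψ(S)| ≥ ε) ≤ δ. -/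

import Mathlib

open Matrix MeasureTheory
open scoped BigOperators ComplexConjugate Kronecker

/-- `n`-qubit operators: matrices indexed by functions `Fin n → Fin 2`. -/
abbrev QMat (n : ℕ) : Type := Matrix (Fin n → Fin 2) (Fin n → Fin 2) ℂ

/-- Combine an assignment on `α` and one on its complement into a full index. -/
noncomputable def embedIdx {n : ℕ} (α : Finset (Fin n)) (i : {x : Fin n // x ∈ α} → Fin 2)
    (k : {x : Fin n // x ∉ α} → Fin 2) : Fin n → Fin 2 :=
  fun x => if h : x ∈ α then i ⟨x, h⟩ else k ⟨x, h⟩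

/-- The reduced density matrix on the qubits in `α` (partial trace over the rest). -/
noncomputable def reduced {n : ℕ} (ρ : QMat n) (α : Finset (Fin n)) :
    Matrix ({x : Fin n // x ∈ α} → Fin 2) ({x : Fin n // x ∈ α} → Fin 2) ℂ :=
  fun i j => ∑ k : ({x : Fin n // x ∉ α} → Fin 2), ρ (embedIdx α i k) (embedIdx α j k)

/-- The concentratable entanglement `C_ψ(S) = 1 - 2^{-|S|} ∑_{α ⊆ S} tr(ρ_α²)`. -/
noncomputable def CE {n : ℕ} (ρ : QMat n) (S : Finset (Fin n)) : ℝ :=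
  1 - (1 / 2 : ℝ) ^ S.card *
    ∑ α ∈ S.powerset, (Matrix.trace (reduced ρ α * reduced ρ α)).re

/-- Tensor product of single-qubit operators on the qubits in `S`, identity elsewhere. -/
noncomputable def localOp {n : ℕ} (S : Finset (Fin n))
    (V : {i : Fin n // i ∈ S} → Matrix (Fin 2) (Fin 2) ℂ) : QMat n :=
  fun x y => ∏ i : Fin n,
    if h : i ∈ S then V ⟨i, h⟩ (x i) (y i)
    else (if x i = y i then 1 else 0)

/-- Projector onto computational basis state `z` on the qubits in `S`, identity elsewhere. -/
noncomputable def projZ {n : ℕ} (S : Finset (Fin n)) (z : {i : Fin n // i ∈ S} → Fin 2) : QMat n :=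
  fun x y => ∏ i : Fin n,
    if h : i ∈ S then (if x i = z ⟨i, h⟩ ∧ y i = z ⟨i, h⟩ then 1 else 0)
    else (if x i = y i then 1 else 0)

noncomputable instance : MeasurableSpace (Matrix.unitaryGroup (Fin 2) ℂ) := borel _
instance : BorelSpace (Matrix.unitaryGroup (Fin 2) ℂ) := ⟨rfl⟩

/-- The Born probability `P_U(z) = tr(U ρ U† |z⟩⟨z|)` of outcome `z` after the local
randomized measurement given by the single-qubit unitaries `V i`, `i ∈ S`. -/
noncomputable def born {n : ℕ} (ρ : QMat n) (S : Finset (Fin n))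
    (V : {i : Fin n // i ∈ S} → Matrix.unitaryGroup (Fin 2) ℂ)
    (z : {i : Fin n // i ∈ S} → Fin 2) : ℝ :=
  (Matrix.trace (localOp S (fun i => (V i : Matrix (Fin 2) (Fin 2) ℂ)) * ρ *
      (localOp S (fun i => (V i : Matrix (Fin 2) (Fin 2) ℂ)))ᴴ * projZ S z)).re

/-- The Born distribution on outcome strings, as a measure. -/
noncomputable def bornMeasure {n : ℕ} (ρ : QMat n) (S : Finset (Fin n))
    (V : {i : Fin n // i ∈ S} → Matrix.unitaryGroup (Fin 2) ℂ) :
    Measure ({i : Fin n // i ∈ S} → Fin 2) :=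
  ∑ z : ({i : Fin n // i ∈ S} → Fin 2), ENNReal.ofReal (born ρ S V z) • Measure.dirac z

/-- Joint law of one round of the LRM experiment: a tuple of Haar-random single-qubit
unitaries together with `K` conditionally i.i.d. Born-distributed outcomes. -/
noncomputable def jointRound {n : ℕ} (μ : Measure (Matrix.unitaryGroup (Fin 2) ℂ))
    (ρ : QMat n) (S : Finset (Fin n)) (K : ℕ) :
    Measure (({i : Fin n // i ∈ S} → Matrix.unitaryGroup (Fin 2) ℂ) ×
      (Fin K → ({i : Fin n // i ∈ S} → Fin 2))) :=
  (Measure.pi fun _ : {i : Fin n // i ∈ S} => μ).bind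
    (fun V => (Measure.pi fun _ : Fin K => bornMeasure ρ S V).map (Prod.mk V))

/-- `Ŝ^(K) = (1/(K(K-1))) ∑_{k ≠ k'} 1{z_k = z_{k'}}`. -/
noncomputable def ShatK {n : ℕ} {S : Finset (Fin n)} (K : ℕ)
    (zs : Fin K → ({i : Fin n // i ∈ S} → Fin 2)) : ℝ :=
  (1 / ((K : ℝ) * ((K : ℝ) - 1))) * ∑ k : Fin K, ∑ k' : Fin K,
    if k ≠ k' ∧ zs k = zs k' then 1 else 0

/-! For fixed local unitaries `U`, the collision statistic has mean `∑ z, P_U(z)²`. Since `P_U(z)`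
is a trace against `U† |z⟩⟨z| U`, the average of its square over independent Haar unitaries
factorizes over qubits into fourth moments of one row of a Haar unitary, which are `(δ_ab δ_cd +
δ_ad δ_cb) / (d (d + 1))`: invariance under diagonal unitaries kills the unpaired moments, and a
polarization identity over the fourth roots of unity determines the remaining ones. With `d = 2`,
expanding the product over `S` of identity plus swap gives, by the swap trick, `∑ α ⊆ S, tr(ρ_α²)`
times `6^{-s}` for each of the `2^s` outcomes; multiplying by `(3/2)^s` turns `3^{-s}` into the
`2^{-s}` of the concentratable entanglement. The deviation bound is Hoeffding's inequality for
rounds with values in an interval of length `(3/2)^s`. -/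

section IndependentCopies

variable {ι Ω : Type*} [Fintype ι] [MeasurableSpace Ω]

theorem integral_pi_average [Nonempty ι] {ν : Measure Ω} [IsProbabilityMeasure ν] {Y : Ω → ℝ}
    (hY : Integrable Y ν) :
    ∫ ω : ι → Ω, (∑ i, Y (ω i)) / Fintype.card ι ∂(Measure.pi fun _ => ν) = ∫ y, Y y ∂ν := by
  rw [integral_div, integral_finsetSum _ fun i _ => integrable_comp_eval (μ := fun _ => ν) hY]
  simp only [integral_comp_eval (μ := fun _ : ι => ν) hY.aestronglyMeasurable, Finset.sum_const,
    Finset.card_univ, nsmul_eq_mul]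
  field_simp

open ProbabilityTheory in
theorem measureReal_pi_abs_sum_sub_integral_ge_le (ν : Measure Ω) [IsProbabilityMeasure ν]
    {Y : Ω → ℝ} {a b t : ℝ} (hY : AEMeasurable Y ν) (hab : ∀ᵐ y ∂ν, Y y ∈ Set.Icc a b)
    (ht : 0 ≤ t) :
    (Measure.pi fun _ : ι => ν).real {ω | t ≤ |∑ i, (Y (ω i) - ∫ y, Y y ∂ν)|} ≤
      2 * Real.exp (-(2 * t ^ 2) / (Fintype.card ι * (b - a) ^ 2)) := by
  set P := Measure.pi fun _ : ι => ν
  set m := ∫ y, Y y ∂ν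
  have hindep : iIndepFun (fun i (ω : ι → Ω) => Y (ω i) - m) P :=
    iIndepFun_pi (X := fun _ y => Y y - m) fun _ => hY.sub_const m
  have hcoord (i : ι) :
      HasSubgaussianMGF (fun ω : ι → Ω => Y (ω i) - m) ((‖b - a‖₊ / 2) ^ 2) P := by
    have heval := measurePreserving_eval (fun _ : ι => ν) i
    refine HasSubgaussianMGF.of_map (X := fun y => Y y - m) heval.measurable.aemeasurable ?_
    rw [heval.map_eq]
    exact hasSubgaussianMGF_of_mem_Icc hY hab
  have hsum := HasSubgaussianMGF.sum_of_iIndepFun hindep (s := Finset.univ) fun i _ => hcoord i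
  have hvar : -t ^ 2 / (2 * ((∑ _i : ι, (‖b - a‖₊ / 2) ^ 2 : NNReal) : ℝ)) =
      -(2 * t ^ 2) / (Fintype.card ι * (b - a) ^ 2) := by
    have : 2 * ((∑ _i : ι, (‖b - a‖₊ / 2) ^ 2 : NNReal) : ℝ) =
        Fintype.card ι * (b - a) ^ 2 / 2 := by
      simp only [div_pow, Finset.sum_const, Finset.card_univ, nsmul_eq_mul, NNReal.coe_mul,
        NNReal.coe_natCast, NNReal.coe_div, NNReal.coe_pow, coe_nnnorm, Real.norm_eq_abs, sq_abs,
        NNReal.coe_ofNat]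
      ring
    rw [this, div_div_eq_mul_div]
    ring
  calc P.real {ω | t ≤ |∑ i, (Y (ω i) - m)|}
      ≤ P.real ({ω | t ≤ ∑ i, (Y (ω i) - m)} ∪ {ω | t ≤ -∑ i, (Y (ω i) - m)}) :=
        measureReal_mono fun ω hω => by
          simpa only [Set.mem_union, Set.mem_ofPred_eq, le_abs] using hω
    _ ≤ P.real {ω | t ≤ ∑ i, (Y (ω i) - m)} + P.real {ω | t ≤ -∑ i, (Y (ω i) - m)} :=
        measureReal_union_le _ _
    _ ≤ 2 * Real.exp (-(2 * t ^ 2) / (Fintype.card ι * (b - a) ^ 2)) := by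
        rw [two_mul, ← hvar]
        exact add_le_add (hsum.measure_ge_le ht) (hsum.neg.measure_ge_le ht)

theorem measure_pi_abs_average_sub_integral_ge_le [Nonempty ι] (ν : Measure Ω)
    [IsProbabilityMeasure ν] {Y : Ω → ℝ} {a b ε δ : ℝ} (hY : AEMeasurable Y ν)
    (hYab : ∀ᵐ y ∂ν, Y y ∈ Set.Icc a b) (hab : a < b) (hε : 0 < ε) (hδ : 0 < δ)
    (hι : (b - a) ^ 2 * Real.log (2 / δ) / (2 * ε ^ 2) ≤ Fintype.card ι) :
    (Measure.pi fun _ : ι => ν) {ω | ε ≤ |(∑ i, Y (ω i)) / Fintype.card ι - ∫ y, Y y ∂ν|} ≤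
      ENNReal.ofReal δ := by
  set L : ℝ := (Fintype.card ι : ℝ) with hL
  have hL₀ : 0 < L := by positivity
  have hba : 0 < b - a := sub_pos.2 hab
  have hset : {ω : ι → Ω | ε ≤ |(∑ i, Y (ω i)) / L - ∫ y, Y y ∂ν|} =
      {ω | L * ε ≤ |∑ i, (Y (ω i) - ∫ y, Y y ∂ν)|} := by
    ext ω
    rw [Set.mem_ofPred_eq, Set.mem_ofPred_eq, Finset.sum_sub_distrib, Finset.sum_const,
      Finset.card_univ, nsmul_eq_mul, ← hL, div_sub' hL₀.ne', abs_div, abs_of_pos hL₀,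
      le_div_iff₀' hL₀]
  have hlog : Real.log (2 / δ) ≤ 2 * (L * ε) ^ 2 / (L * (b - a) ^ 2) := by
    rw [div_le_iff₀ (by positivity)] at hι
    rw [le_div_iff₀ (by positivity)]
    linear_combination L * hι
  rw [hset, ← ofReal_measureReal]
  refine ENNReal.ofReal_le_ofReal ?_
  calc (Measure.pi fun _ : ι => ν).real {ω | L * ε ≤ |∑ i, (Y (ω i) - ∫ y, Y y ∂ν)|}
      ≤ 2 * Real.exp (-(2 * (L * ε) ^ 2) / (L * (b - a) ^ 2)) :=
        measureReal_pi_abs_sum_sub_integral_ge_le ν hY hYab (by positivity)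
    _ ≤ 2 * Real.exp (-Real.log (2 / δ)) := by
        rw [neg_div]
        gcongr
    _ = δ := by
        rw [Real.exp_neg, Real.exp_log (by positivity)]
        field_simp

open ProbabilityTheory in
theorem map_eval_pair_pi (ν : Measure Ω) [IsProbabilityMeasure ν] {i j : ι} (hij : i ≠ j) :
    (Measure.pi fun _ : ι => ν).map (fun ω => (ω i, ω j)) = ν.prod ν := by
  have hindep : IndepFun (fun ω : ι → Ω => ω i) (fun ω => ω j) (Measure.pi fun _ => ν) :=
    (iIndepFun_pi (X := fun _ y => y) fun _ => aemeasurable_id).indepFun hij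
  rw [(indepFun_iff_map_prod_eq_prod_map_map (measurable_pi_apply i).aemeasurable
    (measurable_pi_apply j).aemeasurable).1 hindep]
  congr 1
  exacts [(measurePreserving_eval (fun _ => ν) i).map_eq,
    (measurePreserving_eval (fun _ => ν) j).map_eq]

theorem integral_pi_collision [Fintype Ω] [DecidableEq Ω] [MeasurableSingletonClass Ω]
    (ν : Measure Ω) [IsProbabilityMeasure ν] {i j : ι} (hij : i ≠ j) :
    ∫ ω : ι → Ω, (if ω i = ω j then (1 : ℝ) else 0) ∂(Measure.pi fun _ => ν) =
      ∑ z, ν.real {z} ^ 2 := by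
  have hpair := integral_map (μ := Measure.pi fun _ : ι => ν) (φ := fun ω => (ω i, ω j))
    (f := fun p : Ω × Ω => if p.1 = p.2 then (1 : ℝ) else 0) (by fun_prop)
    (measurable_of_finite _).aestronglyMeasurable
  rw [← hpair, map_eval_pair_pi ν hij, integral_prod _ Integrable.of_finite,
    integral_fintype Integrable.of_finite]
  simp [integral_fintype, sq]

open ProbabilityTheory in
theorem bind_map_prodMk_eq_compProd {α β : Type*} [MeasurableSpace α] [MeasurableSpace β]
    (m : Measure α) [SFinite m] (κ : Kernel α β) [IsSFiniteKernel κ] :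
    m.bind (fun a => (κ a).map (Prod.mk a)) = m ⊗ₘ κ := by
  rw [Measure.compProd_eq_comp_prod]
  refine congrArg _ (funext fun a => ?_)
  rw [Kernel.prod_apply, Kernel.id_apply, Measure.dirac_prod]

theorem measurable_measure_pi {α : Type*} {X : ι → Type*} [MeasurableSpace α]
    [∀ i, MeasurableSpace (X i)] {κ : ∀ i, α → Measure (X i)}
    [∀ i a, IsProbabilityMeasure (κ i a)] (hκ : ∀ i, Measurable (κ i)) :
    Measurable fun a => Measure.pi fun i => κ i a := by
  refine Measurable.measure_of_isPiSystem_of_isProbabilityMeasure generateFrom_pi.symm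
    isPiSystem_pi ?_
  rintro _ ⟨s, hs, rfl⟩
  simp only [Measure.pi_pi]
  exact Finset.measurable_fun_prod _ fun i _ =>
    (Measure.measurable_coe (hs i (Set.mem_univ i))).comp (hκ i)

end IndependentCopies

section HaarMoments

theorem isMulRightInvariant_of_isProbabilityMeasure {G : Type*} [Group G] [TopologicalSpace G]
    [IsTopologicalGroup G] [LocallyCompactSpace G] [MeasurableSpace G] [BorelSpace G]
    (μ : Measure G) [μ.IsHaarMeasure] [IsProbabilityMeasure μ] : μ.IsMulRightInvariant where
  map_mul_right_eq_self g := by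
    have : IsProbabilityMeasure (μ.map (· * g)) := Measure.isProbabilityMeasure_map (by fun_prop)
    exact Measure.isHaarMeasure_eq_of_isProbabilityMeasure _ _

theorem sum_phases_norm_add_mul_pow_four (p q : ℂ) :
    ∑ k ∈ Finset.range 4, ‖p + Complex.I ^ k * q‖ ^ 4 =
      4 * (‖p‖ ^ 4 + ‖q‖ ^ 4 + 4 * (‖p‖ ^ 2 * ‖q‖ ^ 2)) := by
  have hsq (x : ℂ) : ‖x‖ ^ 2 = x.re ^ 2 + x.im ^ 2 := by
    rw [Complex.sq_norm, Complex.normSq_apply, sq x.re, sq x.im]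
  have hfour (x : ℂ) : ‖x‖ ^ 4 = (x.re ^ 2 + x.im ^ 2) ^ 2 := by rw [← hsq, ← pow_mul]
  simp only [Finset.sum_range_succ, Finset.sum_range_zero, zero_add, pow_zero, pow_one,
    Complex.I_sq, Complex.I_pow_three, hfour, hsq, Complex.add_re, Complex.add_im, Complex.mul_re,
    Complex.mul_im, Complex.neg_re, Complex.neg_im, Complex.I_re, Complex.I_im, Complex.one_re,
    Complex.one_im]
  ring

variable {ι : Type*}

theorem exists_phase_ne_one {a b c d : ι} (h₁ : ¬(a = b ∧ c = d)) (h₂ : ¬(a = d ∧ c = b)) :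
    ∃ w : ι → ℂ, (∀ k, ‖w k‖ = 1) ∧ w a * star (w b) * (w c * star (w d)) ≠ 1 := by
  classical
  have hnorm (j k : ι) : ‖(Pi.mulSingle j Complex.I : ι → ℂ) k‖ = 1 := by
    rcases eq_or_ne k j with rfl | hk <;> simp [*]
  have hI : Complex.I ≠ 1 := fun h => by simpa using congrArg Complex.im h
  have hneg : (-1 : ℂ) ≠ 1 := by norm_num
  by_cases hab : a = b
  · subst hab
    have hcd : d ≠ c := fun h => h₁ ⟨rfl, h.symm⟩
    exact ⟨Pi.mulSingle c Complex.I, hnorm c, by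
      rcases eq_or_ne a c with rfl | hac <;> simp [*]⟩
  by_cases had : a = d
  · subst had
    have hcb : b ≠ c := fun h => h₂ ⟨rfl, h.symm⟩
    exact ⟨Pi.mulSingle c Complex.I, hnorm c, by
      rcases eq_or_ne a c with rfl | hac <;> simp [*]⟩
  · exact ⟨Pi.mulSingle a Complex.I, hnorm a, by
      rcases eq_or_ne c a with rfl | hca <;> simp [Ne.symm hab, Ne.symm had, *]⟩

variable [Fintype ι] [DecidableEq ι]

instance unitaryGroup_locallyCompactSpace : LocallyCompactSpace (unitaryGroup ι ℂ) :=
  have : LocallyCompactSpace (Matrix ι ι ℂ) := inferInstanceAs (LocallyCompactSpace (ι → ι → ℂ))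
  isClosed_unitary.isClosedEmbedding_subtypeVal.locallyCompactSpace

theorem continuous_unitaryGroup_apply (z a : ι) : Continuous fun U : unitaryGroup ι ℂ => U z a :=
  continuous_subtype_val.matrix_elem z a

theorem sum_norm_sq_unitaryGroup_row (U : unitaryGroup ι ℂ) (z : ι) : ∑ a, ‖U z a‖ ^ 2 = 1 := by
  have h := congrFun₂ (mem_unitaryGroup_iff.1 U.2) z z
  simp only [mul_apply, star_apply, one_apply_eq, RCLike.star_def, Complex.mul_conj'] at h
  exact_mod_cast h

theorem exists_unitaryGroup_column_eq {u : ι → ℂ} (hu : ∑ k, ‖u k‖ ^ 2 = 1) (a : ι) :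
    ∃ W : unitaryGroup ι ℂ, ∀ k, W k a = u k := by
  have horth : Orthonormal ℂ (({a} : Set ι).domRestrict fun _ => WithLp.toLp 2 u) := by
    rw [orthonormal_subsingleton_iff]
    intro _
    change ‖WithLp.toLp 2 u‖ = 1
    rwa [EuclideanSpace.norm_eq, Real.sqrt_eq_one]
  obtain ⟨b, hb⟩ := horth.exists_orthonormalBasis_extension_of_card_eq (by simp)
  refine ⟨⟨_, (EuclideanSpace.basisFun ι ℂ).toMatrix_orthonormalBasis_mem_unitary b⟩, fun k => ?_⟩
  change (EuclideanSpace.basisFun ι ℂ).repr (b a) k = u k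
  rw [hb a rfl, EuclideanSpace.basisFun_repr]

variable [MeasurableSpace (unitaryGroup ι ℂ)] (μ : Measure (unitaryGroup ι ℂ))

/-- The fourth moment `∫ U_{za} conj(U_{zb}) U_{zc} conj(U_{zd}) dμ(U)` of row `z` of a random
unitary matrix. -/
noncomputable def rowMoment (z a b c d : ι) : ℂ :=
  ∫ U : unitaryGroup ι ℂ, U z a * star (U z b) * (U z c * star (U z d)) ∂μ

theorem rowMoment_diag (z a c : ι) :
    rowMoment μ z a a c c = ((∫ U : unitaryGroup ι ℂ, ‖U z a‖ ^ 2 * ‖U z c‖ ^ 2 ∂μ : ℝ) : ℂ) := by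
  rw [rowMoment, ← integral_complex_ofReal]
  simp [Complex.mul_conj']

variable [BorelSpace (unitaryGroup ι ℂ)]

theorem integral_mulVec_apply_eq_integral_apply [μ.IsMulRightInvariant]
    {E : Type*} [NormedAddCommGroup E] [NormedSpace ℝ E] (f : ℂ → E) {u : ι → ℂ}
    (hu : ∑ k, ‖u k‖ ^ 2 = 1) (z a : ι) :
    ∫ U : unitaryGroup ι ℂ, f (((U : Matrix ι ι ℂ) *ᵥ u) z) ∂μ = ∫ U, f (U z a) ∂μ := by
  obtain ⟨W, hW⟩ := exists_unitaryGroup_column_eq hu a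
  rw [← integral_mul_right_eq_self (fun U => f (U z a)) W]
  simp only [UnitaryGroup.mul_val, mul_apply, mulVec, dotProduct, hW]

theorem integral_norm_add_phase_mul_pow_four [μ.IsMulRightInvariant] {w : ℂ} (hw : ‖w‖ = 1)
    (z : ι) {a c : ι} (hac : a ≠ c) :
    ∫ U : unitaryGroup ι ℂ, ‖U z a + w * U z c‖ ^ 4 ∂μ = 4 * ∫ U, ‖U z a‖ ^ 4 ∂μ := by
  let s : ℂ := ((√2)⁻¹ : ℝ)
  have hs : ‖s‖ ^ 2 = 1 / 2 := by simp [s]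
  let u : ι → ℂ := Pi.single a s + Pi.single c (s * w)
  have hu : ∑ k, ‖u k‖ ^ 2 = 1 := by
    rw [Fintype.sum_eq_add a c hac fun k hk => by simp [u, hk.1, hk.2]]
    norm_num [u, hac, hac.symm, hw, hs]
  have hmulVec (U : unitaryGroup ι ℂ) :
      4 * ‖((U : Matrix ι ι ℂ) *ᵥ u) z‖ ^ 4 = ‖U z a + w * U z c‖ ^ 4 := by
    have : ((U : Matrix ι ι ℂ) *ᵥ u) z = s * (U z a + w * U z c) := by
      simp only [u, mulVec_add, mulVec_single, op_smul_eq_smul, MulOpposite.op_mul, Pi.add_apply,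
        Pi.smul_apply, col_apply, smul_eq_mul, MulOpposite.smul_eq_mul_unop, MulOpposite.unop_mul,
        MulOpposite.unop_op]
      ring
    rw [this, norm_mul, mul_pow, show 4 = 2 * 2 from rfl, pow_mul ‖s‖, hs]
    ring
  simp only [← hmulVec]
  rw [← integral_const_mul]
  exact integral_mulVec_apply_eq_integral_apply μ (fun x => 4 * ‖x‖ ^ 4) hu z a

theorem integrable_row_monomial [IsFiniteMeasure μ] (z a b c d : ι) :
    Integrable (fun U : unitaryGroup ι ℂ => U z a * star (U z b) * (U z c * star (U z d))) μ := by
  have hcont := continuous_unitaryGroup_apply (ι := ι) z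
  have hbound (U : unitaryGroup ι ℂ) := entry_norm_bound_of_unitary U.2 z
  refine Integrable.of_bound (C := 1) (Continuous.aestronglyMeasurable ?_) (ae_of_all _ fun U => ?_)
  · exact ((hcont a).mul (hcont b).star).mul ((hcont c).mul (hcont d).star)
  · simp only [norm_mul, norm_star]
    exact mul_le_one₀ (mul_le_one₀ (hbound U a) (norm_nonneg _) (hbound U b)) (by positivity)
      (mul_le_one₀ (hbound U c) (norm_nonneg _) (hbound U d))

theorem rowMoment_eq_phase_mul [μ.IsMulRightInvariant] {w : ι → ℂ} (hw : ∀ k, ‖w k‖ = 1)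
    (z a b c d : ι) :
    rowMoment μ z a b c d =
      w a * star (w b) * (w c * star (w d)) * rowMoment μ z a b c d := by
  have hW : diagonal w ∈ unitaryGroup ι ℂ := by
    rw [mem_unitaryGroup_iff, star_eq_conjTranspose, diagonal_conjTranspose,
      diagonal_mul_diagonal, ← diagonal_one]
    congr 1
    ext k
    simp [Complex.mul_conj', hw k]
  conv_lhs => rw [rowMoment, ← integral_mul_right_eq_self _ (⟨diagonal w, hW⟩ : unitaryGroup ι ℂ)]
  rw [rowMoment, ← integral_const_mul]
  refine integral_congr_ae (ae_of_all _ fun U => ?_)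
  simp only [UnitaryGroup.mul_val, mul_diagonal, star_mul']
  ring

theorem rowMoment_eq_zero [μ.IsMulRightInvariant] {a b c d : ι} (h₁ : ¬(a = b ∧ c = d))
    (h₂ : ¬(a = d ∧ c = b)) (z : ι) : rowMoment μ z a b c d = 0 := by
  obtain ⟨w, hw, hne⟩ := exists_phase_ne_one h₁ h₂
  by_contra h₀
  exact hne ((mul_eq_right₀ h₀).1 (rowMoment_eq_phase_mul μ hw z a b c d).symm)

theorem integrable_norm_sq_mul_norm_sq [IsFiniteMeasure μ] (z a c : ι) :
    Integrable (fun U : unitaryGroup ι ℂ => ‖U z a‖ ^ 2 * ‖U z c‖ ^ 2) μ := by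
  have h := (integrable_row_monomial μ z a a c c).norm
  simpa only [norm_mul, norm_star, ← sq] using h

theorem integral_norm_pow_four_eq [μ.IsMulRightInvariant] (z a c : ι) :
    ∫ U : unitaryGroup ι ℂ, ‖U z c‖ ^ 4 ∂μ = ∫ U : unitaryGroup ι ℂ, ‖U z a‖ ^ 4 ∂μ := by
  have hunit : ∑ k, ‖(Pi.single c 1 : ι → ℂ) k‖ ^ 2 = 1 := by
    rw [Fintype.sum_eq_single c fun k hk => by simp [hk]]
    simp
  simpa using integral_mulVec_apply_eq_integral_apply μ (fun x => ‖x‖ ^ 4) hunit z a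

theorem integrable_norm_add_phase_mul_pow_four [IsFiniteMeasure μ] {w : ℂ} (hw : ‖w‖ = 1)
    (z a c : ι) : Integrable (fun U : unitaryGroup ι ℂ => ‖U z a + w * U z c‖ ^ 4) μ := by
  have hcont := continuous_unitaryGroup_apply (ι := ι) z
  refine Integrable.of_bound (C := 2 ^ 4)
    (((hcont a).add ((hcont c).const_mul w)).norm.pow 4).aestronglyMeasurable
    (ae_of_all _ fun U => ?_)
  have hle : ‖U z a + w * U z c‖ ≤ 2 := by
    calc ‖U z a + w * U z c‖ ≤ ‖U z a‖ + ‖w‖ * ‖U z c‖ := by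
          simpa only [norm_mul] using norm_add_le (U z a) (w * U z c)
      _ ≤ 1 + 1 * 1 := by
          rw [hw]
          gcongr <;> exact entry_norm_bound_of_unitary U.2 z _
      _ = 2 := by norm_num
  rw [Real.norm_of_nonneg (by positivity)]
  gcongr

theorem integral_norm_sq_mul_norm_sq_of_ne [IsFiniteMeasure μ] [μ.IsMulRightInvariant]
    (z : ι) {a c : ι} (hac : a ≠ c) :
    ∫ U : unitaryGroup ι ℂ, ‖U z a‖ ^ 2 * ‖U z c‖ ^ 2 ∂μ = (∫ U, ‖U z a‖ ^ 4 ∂μ) / 2 := by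
  have hnorm (k : ℕ) : ‖Complex.I ^ k‖ = 1 := by simp
  have hfourth (b : ι) : Integrable (fun U : unitaryGroup ι ℂ => ‖U z b‖ ^ 4) μ := by
    simpa only [← pow_add] using integrable_norm_sq_mul_norm_sq μ z b b
  have hleft :
      ∫ U : unitaryGroup ι ℂ, ∑ k ∈ Finset.range 4, ‖U z a + Complex.I ^ k * U z c‖ ^ 4 ∂μ =
      16 * ∫ U : unitaryGroup ι ℂ, ‖U z a‖ ^ 4 ∂μ := by
    rw [integral_finsetSum _ fun k _ => integrable_norm_add_phase_mul_pow_four μ (hnorm k) z a c]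
    simp only [integral_norm_add_phase_mul_pow_four μ (hnorm _) z hac, Finset.sum_const,
      Finset.card_range, nsmul_eq_mul]
    ring
  simp only [sum_phases_norm_add_mul_pow_four] at hleft
  rw [integral_const_mul, integral_add (by exact (hfourth a).add (hfourth c))
      ((integrable_norm_sq_mul_norm_sq μ z a c).const_mul 4), integral_const_mul,
    integral_add (hfourth a) (hfourth c), integral_norm_pow_four_eq μ z a c] at hleft
  linear_combination hleft / 16

theorem sum_integral_norm_sq_mul_norm_sq [IsProbabilityMeasure μ] (z : ι) :
    ∑ a, ∑ c, ∫ U : unitaryGroup ι ℂ, ‖U z a‖ ^ 2 * ‖U z c‖ ^ 2 ∂μ = 1 := by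
  have hint := integrable_norm_sq_mul_norm_sq μ z
  calc ∑ a, ∑ c, ∫ U : unitaryGroup ι ℂ, ‖U z a‖ ^ 2 * ‖U z c‖ ^ 2 ∂μ
      = ∫ U : unitaryGroup ι ℂ, ∑ a, ∑ c, ‖U z a‖ ^ 2 * ‖U z c‖ ^ 2 ∂μ := by
        rw [integral_finsetSum _ fun a _ => integrable_finsetSum _ fun c _ => hint a c]
        simp only [integral_finsetSum _ fun c _ => hint _ c]
    _ = ∫ _U : unitaryGroup ι ℂ, 1 ∂μ := by
        simp only [← Finset.sum_mul_sum, sum_norm_sq_unitaryGroup_row, one_mul]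
    _ = 1 := by simp

theorem integral_norm_sq_mul_norm_sq [IsProbabilityMeasure μ] [μ.IsMulRightInvariant]
    (z a c : ι) :
    ∫ U : unitaryGroup ι ℂ, ‖U z a‖ ^ 2 * ‖U z c‖ ^ 2 ∂μ =
      (1 + if a = c then 1 else 0) / (Fintype.card ι * (Fintype.card ι + 1)) := by
  set d : ℝ := (Fintype.card ι : ℝ) with hd
  set m := ∫ U : unitaryGroup ι ℂ, ‖U z z‖ ^ 4 ∂μ
  have hmoment (b e : ι) : ∫ U : unitaryGroup ι ℂ, ‖U z b‖ ^ 2 * ‖U z e‖ ^ 2 ∂μ =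
      m / 2 * (1 + if b = e then 1 else 0) := by
    rcases eq_or_ne b e with rfl | hbe
    · simp only [← pow_add, if_true]
      linear_combination integral_norm_pow_four_eq μ z z b
    · rw [integral_norm_sq_mul_norm_sq_of_ne μ z hbe, integral_norm_pow_four_eq μ z z b]
      simp [hbe, m]
  have hnormalized : m / 2 * (d * (d + 1)) = 1 := by
    have hsum := sum_integral_norm_sq_mul_norm_sq μ z
    simp only [hmoment, ← Finset.mul_sum, Finset.sum_add_distrib, Finset.sum_const,
      Finset.card_univ, Finset.sum_ite_eq, Finset.mem_univ, if_true, nsmul_eq_mul, ← hd] at hsum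
    linear_combination hsum
  have hd₀ : 0 < d := Nat.cast_pos.2 (Fintype.card_pos_iff.2 ⟨z⟩)
  rw [hmoment, eq_div_iff (by positivity)]
  linear_combination (1 + if a = c then 1 else 0) * hnormalized

theorem rowMoment_eq [IsProbabilityMeasure μ] [μ.IsMulRightInvariant] (z a b c d : ι) :
    rowMoment μ z a b c d =
      ((if a = b ∧ c = d then 1 else 0) + (if a = d ∧ c = b then 1 else 0)) /
        (Fintype.card ι * (Fintype.card ι + 1)) := by
  have hdiag (a c : ι) : rowMoment μ z a a c c =
      (1 + if a = c then 1 else 0) / (Fintype.card ι * (Fintype.card ι + 1)) := by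
    rw [rowMoment_diag, integral_norm_sq_mul_norm_sq]
    split_ifs <;> norm_num
  by_cases h₁ : a = b ∧ c = d
  · obtain ⟨rfl, rfl⟩ := h₁
    simp [hdiag, eq_comm (a := c)]
  by_cases h₂ : a = d ∧ c = b
  · have hswap : rowMoment μ z a b c d = rowMoment μ z a d c b := by
      unfold rowMoment
      congr! 2
      ring
    obtain ⟨rfl, rfl⟩ := h₂
    have hac : a ≠ c := fun h => h₁ ⟨h, h.symm⟩
    simp [hswap, hdiag, hac]
  · simp [rowMoment_eq_zero μ h₁ h₂, h₁, h₂]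

end HaarMoments

section LocalOperators

open scoped ComplexOrder MatrixOrder in
theorem trace_mul_nonneg {ι 𝕜 : Type*} [Fintype ι] [RCLike 𝕜] {A B : Matrix ι ι 𝕜}
    (hA : A.PosSemidef) (hB : B.PosSemidef) : 0 ≤ (A * B).trace := by
  classical
  obtain ⟨C, rfl⟩ := CStarAlgebra.nonneg_iff_eq_star_mul_self.1 hB.nonneg
  rw [star_eq_conjTranspose, ← Matrix.mul_assoc, trace_mul_comm, ← Matrix.mul_assoc]
  exact (hA.mul_mul_conjTranspose_same C).trace_nonneg

variable {n : ℕ} {S : Finset (Fin n)}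

theorem localOp_apply (V : S → Matrix (Fin 2) (Fin 2) ℂ) (x y : Fin n → Fin 2) :
    localOp S V x y =
      (∏ i : S, V i (x i) (y i)) * ∏ i : {i // i ∉ S}, if x i = y i then 1 else 0 := by
  rw [localOp, ← Fintype.prod_subtype_mul_prod_subtype (fun i => i ∈ S)]
  congr 1 <;> refine Finset.prod_congr (Finset.ext fun _ => by simp) fun i _ => by simp [i.2]

theorem localOp_mul (V W : S → Matrix (Fin 2) (Fin 2) ℂ) :
    localOp S V * localOp S W = localOp S fun i => V i * W i := by
  ext x y
  simp only [localOp, mul_apply, ← Finset.prod_mul_distrib]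
  rw [← Fintype.prod_sum fun i k => (if h : i ∈ S then V ⟨i, h⟩ (x i) k
      else if x i = k then 1 else 0) * (if h : i ∈ S then W ⟨i, h⟩ k (y i)
      else if k = y i then 1 else 0)]
  refine Finset.prod_congr rfl fun i _ => ?_
  by_cases h : i ∈ S <;> simp [h]

theorem localOp_conjTranspose (V : S → Matrix (Fin 2) (Fin 2) ℂ) :
    (localOp S V)ᴴ = localOp S fun i => (V i)ᴴ := by
  ext x y
  rw [conjTranspose_apply, localOp, star_prod]
  refine Finset.prod_congr rfl fun i _ => ?_
  by_cases h : i ∈ S <;> simp [h, apply_ite, eq_comm]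

theorem localOp_one : localOp S (fun _ => 1) = 1 := by
  ext x y
  simp [localOp, one_apply, Finset.prod_ite_zero, funext_iff]

theorem projZ_eq_localOp (z : S → Fin 2) :
    projZ S z = localOp S fun i => single (z i) (z i) 1 := by
  ext x y
  refine Finset.prod_congr rfl fun i _ => ?_
  by_cases h : i ∈ S <;> simp [h, single_apply, eq_comm]

theorem sum_localOp_eq_localOp_sum (A : S → Fin 2 → Matrix (Fin 2) (Fin 2) ℂ) :
    ∑ z : S → Fin 2, localOp S (fun i => A i (z i)) = localOp S fun i => ∑ k, A i k := by
  ext x y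
  simp only [Matrix.sum_apply, localOp_apply, ← Finset.sum_mul, Fintype.prod_sum]

/-- The effect `U† |z⟩⟨z| U` measured by outcome `z` when the basis measurement on the qubits in `S`
is preceded by the local unitary `U = ⨂ i, V i`. -/
noncomputable def basisEffect (S : Finset (Fin n)) (V : S → unitaryGroup (Fin 2) ℂ)
    (z : S → Fin 2) : QMat n :=
  localOp S fun i => (V i).valᴴ * (single (z i) (z i) 1 * (V i).val)

theorem born_eq_re_trace (ρ : QMat n) (V : S → unitaryGroup (Fin 2) ℂ) (z : S → Fin 2) :
    born ρ S V z = (ρ * basisEffect S V z).trace.re := by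
  rw [born, basisEffect, projZ_eq_localOp, ← localOp_mul, ← localOp_mul, ← localOp_conjTranspose,
    Matrix.mul_assoc, Matrix.mul_assoc, trace_mul_comm]
  simp only [Matrix.mul_assoc]

open scoped ComplexOrder in
theorem posSemidef_basisEffect (V : S → unitaryGroup (Fin 2) ℂ) (z : S → Fin 2) :
    (basisEffect S V z).PosSemidef := by
  have hfactor : basisEffect S V z =
      (localOp S fun i => single (z i) (z i) 1 * (V i).val)ᴴ *
        localOp S fun i => single (z i) (z i) 1 * (V i).val := by
    rw [localOp_conjTranspose, localOp_mul, basisEffect]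
    simp [Matrix.mul_assoc, ← Matrix.mul_assoc (single _ _ _)]
  rw [hfactor]
  exact posSemidef_conjTranspose_mul_self _

open scoped ComplexOrder in
theorem trace_mul_basisEffect_nonneg {ρ : QMat n} (hρ : ρ.PosSemidef)
    (V : S → unitaryGroup (Fin 2) ℂ) (z : S → Fin 2) : 0 ≤ (ρ * basisEffect S V z).trace :=
  trace_mul_nonneg hρ (posSemidef_basisEffect V z)

open scoped ComplexOrder in
theorem ofReal_born {ρ : QMat n} (hρ : ρ.PosSemidef) (V : S → unitaryGroup (Fin 2) ℂ)
    (z : S → Fin 2) : (born ρ S V z : ℂ) = (ρ * basisEffect S V z).trace := by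
  rw [born_eq_re_trace]
  exact (Complex.eq_re_of_ofReal_le (r := 0) (trace_mul_basisEffect_nonneg hρ V z)).symm

theorem sum_basisEffect (V : S → unitaryGroup (Fin 2) ℂ) : ∑ z, basisEffect S V z = 1 := by
  have hcomplete (i : S) : ∑ k, (V i).valᴴ * (single k k 1 * (V i).val) = 1 := by
    rw [← Finset.mul_sum, ← Finset.sum_mul, sum_single_one, Matrix.one_mul]
    exact UnitaryGroup.star_mul_self (V i)
  simp only [basisEffect, sum_localOp_eq_localOp_sum
    (fun i k => (V i).valᴴ * (single k k 1 * (V i).val)), hcomplete, localOp_one]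

theorem basisEffect_apply (V : S → unitaryGroup (Fin 2) ℂ) (z : S → Fin 2) (x y : Fin n → Fin 2) :
    basisEffect S V z y x = (∏ i : S, V i (z i) (x i) * star (V i (z i) (y i))) *
      ∏ i : {i // i ∉ S}, if y i = x i then 1 else 0 := by
  rw [basisEffect, localOp_apply]
  congr 1
  refine Finset.prod_congr rfl fun i _ => ?_
  rw [mul_apply, Finset.sum_eq_single (z i) (fun k _ hk => by simp [hk]) (by simp)]
  simp [mul_comm]

end LocalOperators

section Purity

variable {n : ℕ}

theorem sum_eq_sum_embedIdx {M : Type*} [AddCommMonoid M] (α : Finset (Fin n))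
    (f : (Fin n → Fin 2) → M) : ∑ x, f x = ∑ i, ∑ k, f (embedIdx α i k) := by
  rw [← Fintype.sum_prod_type']
  exact ((Equiv.piEquivPiSubtypeProd (fun i => i ∈ α) fun _ => Fin 2).symm.sum_comp f).symm

theorem piecewise_embedIdx (α : Finset (Fin n)) (i j : α → Fin 2) (k l : {x // x ∉ α} → Fin 2) :
    α.piecewise (embedIdx α i k) (embedIdx α j l) = embedIdx α i l := by
  ext x
  by_cases h : x ∈ α <;> simp [embedIdx, h]

-- The swap trick: the purity of the reduced state on `α` is the expectation, in two copies of `ρ`,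
-- of the permutation exchanging their `α`-registers.
theorem trace_reduced_mul_reduced (ρ : QMat n) (α : Finset (Fin n)) :
    (reduced ρ α * reduced ρ α).trace =
      ∑ x, ∑ x', ρ x (α.piecewise x' x) * ρ x' (α.piecewise x x') := by
  simp only [sum_eq_sum_embedIdx α, piecewise_embedIdx, trace, diag_apply, mul_apply, reduced,
    Finset.sum_mul_sum]
  exact Finset.sum_congr rfl fun i _ => Finset.sum_comm

theorem trace_reduced_mul_reduced_eq_sum_ite (ρ : QMat n) (α : Finset (Fin n)) :
    (reduced ρ α * reduced ρ α).trace =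
      ∑ p : ((Fin n → Fin 2) × (Fin n → Fin 2)) × ((Fin n → Fin 2) × (Fin n → Fin 2)),
        ρ p.1.1 p.1.2 * ρ p.2.1 p.2.2 *
          if p.1.2 = α.piecewise p.2.1 p.1.1 ∧ p.2.2 = α.piecewise p.1.1 p.2.1 then 1 else 0 := by
  simp only [trace_reduced_mul_reduced, Fintype.sum_prod_type]
  refine Finset.sum_congr rfl fun x _ => ?_
  rw [Finset.sum_comm]
  simp only [ite_and, mul_ite, mul_one, mul_zero, Finset.sum_ite_irrel, Finset.sum_ite_eq',
    Finset.sum_const_zero, Finset.mem_univ, if_true]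

theorem prod_add_mul_prod_compl_eq_sum_powerset {κ R : Type*} [Fintype κ] [DecidableEq κ]
    [CommSemiring R] (S : Finset κ) (f g : κ → R) :
    (∏ i : S, (f i + g i)) * ∏ i : {i // i ∉ S}, g i =
      ∑ α ∈ S.powerset, ∏ i, α.piecewise f g i := by
  have hcompl : ∏ i : {i // i ∉ S}, g i = ∏ i ∈ Sᶜ, g i :=
    (Finset.prod_subtype _ (by simp) g).symm
  rw [Finset.prod_coe_sort S fun i => f i + g i, Finset.prod_add, Finset.sum_mul, hcompl]
  refine Finset.sum_congr rfl fun α hα => ?_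
  rw [Finset.prod_piecewise, Finset.univ_inter, ← Finset.compl_eq_univ_sdiff, mul_assoc,
    ← Finset.prod_sdiff (Finset.compl_subset_compl.2 (Finset.mem_powerset.1 hα)),
    compl_sdiff_compl]

theorem prod_ite_swap (α : Finset (Fin n)) (x y x' y' : Fin n → Fin 2) :
    ∏ i, α.piecewise (fun i => if x i = y' i ∧ x' i = y i then (1 : ℂ) else 0)
      (fun i => if x i = y i ∧ x' i = y' i then 1 else 0) i =
      if y = α.piecewise x' x ∧ y' = α.piecewise x x' then 1 else 0 := by
  have hfactor (i : Fin n) : α.piecewise (fun i => if x i = y' i ∧ x' i = y i then (1 : ℂ) else 0)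
      (fun i => if x i = y i ∧ x' i = y' i then 1 else 0) i =
      if y i = α.piecewise x' x i ∧ y' i = α.piecewise x x' i then 1 else 0 := by
    by_cases h : i ∈ α <;> simp [h, eq_comm, and_comm]
  simp only [hfactor, Finset.prod_ite_zero, Finset.prod_const_one, Finset.mem_univ, forall_const,
    forall_and, ← funext_iff]

end Purity

section SecondMoment

variable {n : ℕ} (μ : Measure (unitaryGroup (Fin 2) ℂ))

theorem basisEffect_mul_basisEffect_apply {S : Finset (Fin n)} (V : S → unitaryGroup (Fin 2) ℂ)
    (z : S → Fin 2) (x y x' y' : Fin n → Fin 2) :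
    basisEffect S V z y x * basisEffect S V z y' x' =
      (∏ i : S, V i (z i) (x i) * star (V i (z i) (y i)) *
        (V i (z i) (x' i) * star (V i (z i) (y' i)))) *
      ∏ i : {i // i ∉ S}, if x i = y i ∧ x' i = y' i then 1 else 0 := by
  rw [basisEffect_apply, basisEffect_apply, mul_mul_mul_comm, ← Finset.prod_mul_distrib,
    ← Finset.prod_mul_distrib]
  simp only [ite_zero_mul_ite_zero, mul_one, eq_comm (a := y _), eq_comm (a := y' _)]

theorem integrable_basisEffect_mul_basisEffect [IsFiniteMeasure μ] (S : Finset (Fin n))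
    (z : S → Fin 2) (x y x' y' : Fin n → Fin 2) :
    Integrable (fun V => basisEffect S V z y x * basisEffect S V z y' x')
      (Measure.pi fun _ : S => μ) := by
  simp only [basisEffect_mul_basisEffect_apply]
  exact (Integrable.fintype_prod fun i : S =>
    integrable_row_monomial μ (z i) (x i) (y i) (x' i) (y' i)).mul_const _

theorem integral_basisEffect_mul_basisEffect [IsProbabilityMeasure μ] [μ.IsMulRightInvariant]
    (S : Finset (Fin n)) (z : S → Fin 2) (x y x' y' : Fin n → Fin 2) :
    ∫ V, basisEffect S V z y x * basisEffect S V z y' x' ∂(Measure.pi fun _ : S => μ) =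
      (1 / 6) ^ S.card * ∑ α ∈ S.powerset,
        if y = α.piecewise x' x ∧ y' = α.piecewise x x' then 1 else 0 := by
  have hrow (i : S) : rowMoment μ (z i) (x i) (y i) (x' i) (y' i) =
      1 / 6 * ((if x i = y' i ∧ x' i = y i then 1 else 0) +
        if x i = y i ∧ x' i = y' i then 1 else 0) := by
    rw [rowMoment_eq, Fintype.card_fin]
    ring
  have hprod : ∫ V : S → unitaryGroup (Fin 2) ℂ, ∏ i, V i (z i) (x i) * star (V i (z i) (y i)) *
      (V i (z i) (x' i) * star (V i (z i) (y' i))) ∂(Measure.pi fun _ => μ) =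
      ∏ i : S, rowMoment μ (z i) (x i) (y i) (x' i) (y' i) :=
    integral_fintype_prod_eq_prod (μ := fun _ : S => μ) fun i U =>
      U (z i) (x i) * star (U (z i) (y i)) * (U (z i) (x' i) * star (U (z i) (y' i)))
  simp only [basisEffect_mul_basisEffect_apply, integral_mul_const, hprod, hrow]
  rw [Finset.prod_mul_distrib, Finset.prod_const, Finset.card_univ, Fintype.card_coe, mul_assoc,
    prod_add_mul_prod_compl_eq_sum_powerset S
      (fun i => if x i = y' i ∧ x' i = y i then 1 else 0)
      fun i => if x i = y i ∧ x' i = y' i then 1 else 0]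
  simp only [prod_ite_swap]

theorem trace_mul_sq_eq_sum {ι R : Type*} [Fintype ι] [CommSemiring R] (A B : Matrix ι ι R) :
    (A * B).trace ^ 2 =
      ∑ p : (ι × ι) × (ι × ι), A p.1.1 p.1.2 * A p.2.1 p.2.2 * (B p.1.2 p.1.1 * B p.2.2 p.2.1) := by
  have htrace : (A * B).trace = ∑ p : ι × ι, A p.1 p.2 * B p.2 p.1 := by
    simp only [trace, diag_apply, mul_apply, Fintype.sum_prod_type]
  rw [htrace, sq, Fintype.sum_mul_sum, ← Fintype.sum_prod_type']
  exact Finset.sum_congr rfl fun p _ => mul_mul_mul_comm _ _ _ _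

theorem integral_trace_mul_basisEffect_sq [IsProbabilityMeasure μ] [μ.IsMulRightInvariant]
    (ρ : QMat n) (S : Finset (Fin n)) (z : S → Fin 2) :
    ∫ V, (ρ * basisEffect S V z).trace ^ 2 ∂(Measure.pi fun _ : S => μ) =
      (1 / 6) ^ S.card * ∑ α ∈ S.powerset, (reduced ρ α * reduced ρ α).trace := by
  simp only [trace_mul_sq_eq_sum]
  rw [integral_finsetSum _ fun p _ =>
    (integrable_basisEffect_mul_basisEffect μ S z _ _ _ _).const_mul _]
  simp only [integral_const_mul, integral_basisEffect_mul_basisEffect,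
    trace_reduced_mul_reduced_eq_sum_ite, Finset.mul_sum]
  rw [Finset.sum_comm]
  simp only [mul_left_comm]

theorem integrable_trace_mul_basisEffect_sq [IsFiniteMeasure μ] (ρ : QMat n) (S : Finset (Fin n))
    (z : S → Fin 2) :
    Integrable (fun V => (ρ * basisEffect S V z).trace ^ 2) (Measure.pi fun _ : S => μ) := by
  simp only [trace_mul_sq_eq_sum]
  exact integrable_finsetSum _ fun p _ =>
    (integrable_basisEffect_mul_basisEffect μ S z _ _ _ _).const_mul _

open scoped ComplexOrder in
theorem integral_sum_born_sq [IsProbabilityMeasure μ] [μ.IsMulRightInvariant] {ρ : QMat n}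
    (hρ : ρ.PosSemidef) (S : Finset (Fin n)) :
    ∫ V, ∑ z, born ρ S V z ^ 2 ∂(Measure.pi fun _ : S => μ) =
      (1 / 3) ^ S.card * ∑ α ∈ S.powerset, (reduced ρ α * reduced ρ α).trace.re := by
  have hcomplex : ((∫ V, ∑ z, born ρ S V z ^ 2 ∂(Measure.pi fun _ : S => μ) : ℝ) : ℂ) =
      ((1 / 3 : ℝ) ^ S.card : ℝ) * ∑ α ∈ S.powerset, (reduced ρ α * reduced ρ α).trace := by
    rw [← integral_complex_ofReal]
    simp only [Complex.ofReal_sum, Complex.ofReal_pow, ofReal_born hρ]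
    rw [integral_finsetSum _ fun z _ => integrable_trace_mul_basisEffect_sq μ ρ S z]
    simp only [integral_trace_mul_basisEffect_sq, Finset.sum_const, Finset.card_univ,
      Fintype.card_fun, Fintype.card_fin, Fintype.card_coe, nsmul_eq_mul, Nat.cast_pow]
    rw [← mul_assoc, ← mul_pow]
    norm_num
  have hre := congrArg Complex.re hcomplex
  rwa [Complex.ofReal_re, Complex.re_ofReal_mul, Complex.re_sum] at hre

end SecondMoment

section Experiment

open scoped ComplexOrder in
/-- A density matrix: the state, pure or mixed, of a quantum system with computational basis `ι`. -/
structure IsDensityMatrix {ι : Type*} [Fintype ι] (ρ : Matrix ι ι ℂ) : Prop where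
  posSemidef : ρ.PosSemidef
  trace_eq_one : ρ.trace = 1

open scoped ComplexOrder in
theorem isDensityMatrix_vecMulVec {ι : Type*} [Fintype ι] {ψ : ι → ℂ}
    (hψ : ∑ x, star (ψ x) * ψ x = 1) : IsDensityMatrix (vecMulVec ψ (star ψ)) where
  posSemidef := posSemidef_vecMulVec_self_star ψ
  trace_eq_one := by rw [trace_vecMulVec, dotProduct_comm]; exact hψ

variable {n : ℕ} {ρ : QMat n} {S : Finset (Fin n)} {K : ℕ}

open scoped ComplexOrder in
theorem IsDensityMatrix.born_nonneg (hρ : IsDensityMatrix ρ) (V : S → unitaryGroup (Fin 2) ℂ)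
    (z : S → Fin 2) : 0 ≤ born ρ S V z := by
  rw [born_eq_re_trace]
  exact (Complex.nonneg_iff.1 (trace_mul_basisEffect_nonneg hρ.posSemidef V z)).1

theorem IsDensityMatrix.sum_born (hρ : IsDensityMatrix ρ) (V : S → unitaryGroup (Fin 2) ℂ) :
    ∑ z, born ρ S V z = 1 := by
  simp only [born_eq_re_trace]
  rw [← Complex.re_sum, ← trace_sum, ← Finset.mul_sum, sum_basisEffect, Matrix.mul_one,
    hρ.trace_eq_one, Complex.one_re]

theorem bornMeasure_singleton (ρ : QMat n) (V : S → unitaryGroup (Fin 2) ℂ) (z : S → Fin 2) :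
    bornMeasure ρ S V {z} = ENNReal.ofReal (born ρ S V z) := by
  simp [bornMeasure, Set.indicator_apply]

theorem IsDensityMatrix.isProbabilityMeasure_bornMeasure (hρ : IsDensityMatrix ρ)
    (V : S → unitaryGroup (Fin 2) ℂ) : IsProbabilityMeasure (bornMeasure ρ S V) where
  measure_univ := by
    simp [bornMeasure, ← ENNReal.ofReal_sum_of_nonneg fun z _ => hρ.born_nonneg V z, hρ.sum_born]

theorem measurable_basisEffect_apply (z : S → Fin 2) (x y : Fin n → Fin 2) :
    Measurable fun V => basisEffect S V z y x := by
  have hentry (i : S) (a : Fin 2) :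
      Measurable fun V : S → unitaryGroup (Fin 2) ℂ => V i (z i) a :=
    (continuous_unitaryGroup_apply (z i) a).measurable.comp (measurable_pi_apply i)
  simp only [basisEffect_apply]
  exact (Finset.measurable_fun_prod _ fun i _ =>
    (hentry i _).mul (continuous_star.measurable.comp (hentry i _))).mul_const _

theorem measurable_born (ρ : QMat n) (z : S → Fin 2) : Measurable fun V => born ρ S V z := by
  simp only [born_eq_re_trace, trace, diag_apply, mul_apply]
  exact Complex.measurable_re.comp <| Finset.measurable_fun_sum _ fun x _ =>
    Finset.measurable_fun_sum _ fun y _ => (measurable_basisEffect_apply z x y).const_mul _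

theorem measurable_bornMeasure (ρ : QMat n) (S : Finset (Fin n)) :
    Measurable (bornMeasure ρ S) := by
  refine Measure.measurable_of_measurable_coe _ fun s _ => ?_
  simp only [bornMeasure, Measure.finsetSum_apply, Measure.smul_apply, smul_eq_mul]
  exact Finset.measurable_fun_sum _ fun z _ => (measurable_born ρ z).ennreal_ofReal.mul_const _

open ProbabilityTheory

/-- The conditional law, given the local unitaries, of `K` independent measurement outcomes. -/
noncomputable def outcomeKernel (hρ : IsDensityMatrix ρ) (S : Finset (Fin n)) (K : ℕ) :
    Kernel (S → unitaryGroup (Fin 2) ℂ) (Fin K → S → Fin 2) where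
  toFun V := Measure.pi fun _ => bornMeasure ρ S V
  measurable' := by
    have (V : S → unitaryGroup (Fin 2) ℂ) := hρ.isProbabilityMeasure_bornMeasure V
    exact measurable_measure_pi fun _ => measurable_bornMeasure ρ S

instance (hρ : IsDensityMatrix ρ) : IsMarkovKernel (outcomeKernel hρ S K) where
  isProbabilityMeasure V := by
    have := hρ.isProbabilityMeasure_bornMeasure V
    exact inferInstanceAs (IsProbabilityMeasure (Measure.pi fun _ : Fin K => bornMeasure ρ S V))

theorem jointRound_eq_compProd (μ : Measure (unitaryGroup (Fin 2) ℂ)) [IsProbabilityMeasure μ]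
    (hρ : IsDensityMatrix ρ) (S : Finset (Fin n)) (K : ℕ) :
    jointRound μ ρ S K = (Measure.pi fun _ : S => μ) ⊗ₘ outcomeKernel hρ S K :=
  bind_map_prodMk_eq_compProd _ (outcomeKernel hρ S K)

theorem isProbabilityMeasure_jointRound (μ : Measure (unitaryGroup (Fin 2) ℂ))
    [IsProbabilityMeasure μ] (hρ : IsDensityMatrix ρ) (S : Finset (Fin n)) (K : ℕ) :
    IsProbabilityMeasure (jointRound μ ρ S K) := by
  rw [jointRound_eq_compProd μ hρ]
  infer_instance

theorem ShatK_eq_sum_offDiag_div_card (zs : Fin K → S → Fin 2) :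
    ShatK K zs = (∑ p ∈ Finset.univ.offDiag, if zs p.1 = zs p.2 then 1 else 0) /
      (Finset.univ : Finset (Fin K)).offDiag.card := by
  have hcard : ((Finset.univ : Finset (Fin K)).offDiag.card : ℝ) = K * (K - 1) := by
    rw [Finset.offDiag_card, Finset.card_univ, Fintype.card_fin, Nat.cast_sub (Nat.le_mul_self K)]
    push_cast
    ring
  have hoffDiag : (Finset.univ : Finset (Fin K)).offDiag =
      (Finset.univ ×ˢ Finset.univ).filter fun p => p.1 ≠ p.2 := by
    ext p
    simp
  rw [ShatK, hcard, one_div_mul_eq_div, hoffDiag, Finset.sum_filter, Finset.sum_product]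
  simp only [ite_and]

theorem ShatK_mem_Icc (zs : Fin K → S → Fin 2) : ShatK K zs ∈ Set.Icc (0 : ℝ) 1 := by
  rw [ShatK_eq_sum_offDiag_div_card, Finset.sum_boole]
  exact ⟨by positivity,
    div_le_one_of_le₀ (Nat.cast_le.2 (Finset.card_filter_le _ _)) (Nat.cast_nonneg _)⟩

theorem integral_ShatK (ν : Measure (S → Fin 2)) [IsProbabilityMeasure ν] (hK : 2 ≤ K) :
    ∫ zs : Fin K → S → Fin 2, ShatK K zs ∂(Measure.pi fun _ => ν) = ∑ z, ν.real {z} ^ 2 := by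
  have hcard : ((Finset.univ : Finset (Fin K)).offDiag.card : ℝ) ≠ 0 := by
    have : Nontrivial (Fin K) := Fin.nontrivial_iff_two_le.2 hK
    obtain ⟨i, j, hij⟩ := exists_pair_ne (Fin K)
    exact Nat.cast_ne_zero.2 (Finset.card_ne_zero.2 ⟨(i, j), by simpa using hij⟩)
  simp only [ShatK_eq_sum_offDiag_div_card]
  rw [integral_div, integral_finsetSum _ fun p _ => Integrable.of_finite,
    Finset.sum_congr rfl fun p hp => integral_pi_collision ν (Finset.mem_offDiag.1 hp).2.2,
    Finset.sum_const, nsmul_eq_mul, mul_div_cancel_left₀ _ hcard]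

theorem integral_ShatK_outcomeKernel (hρ : IsDensityMatrix ρ) (hK : 2 ≤ K)
    (V : S → unitaryGroup (Fin 2) ℂ) :
    ∫ zs, ShatK K zs ∂(outcomeKernel hρ S K V) = ∑ z, born ρ S V z ^ 2 := by
  have := hρ.isProbabilityMeasure_bornMeasure V
  refine (integral_ShatK (bornMeasure ρ S V) hK).trans (Finset.sum_congr rfl fun z _ => ?_)
  rw [measureReal_def, bornMeasure_singleton, ENNReal.toReal_ofReal (hρ.born_nonneg V z)]

theorem integrable_ShatK_snd {α : Type*} [MeasurableSpace α]
    (ν : Measure (α × (Fin K → S → Fin 2))) [IsFiniteMeasure ν] :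
    Integrable (fun r => ShatK K r.2) ν :=
  Integrable.of_mem_Icc 0 1 ((measurable_of_finite (ShatK K)).comp measurable_snd).aemeasurable
    (ae_of_all _ fun r => ShatK_mem_Icc r.2)

theorem integral_ShatK_jointRound (μ : Measure (unitaryGroup (Fin 2) ℂ)) [IsProbabilityMeasure μ]
    [μ.IsMulRightInvariant] (hρ : IsDensityMatrix ρ) (S : Finset (Fin n)) (hK : 2 ≤ K) :
    ∫ r, ShatK K r.2 ∂(jointRound μ ρ S K) =
      (1 / 3) ^ S.card * ∑ α ∈ S.powerset, (reduced ρ α * reduced ρ α).trace.re := by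
  rw [jointRound_eq_compProd μ hρ, Measure.integral_compProd (integrable_ShatK_snd _)]
  simp only [integral_ShatK_outcomeKernel hρ hK]
  exact integral_sum_born_sq μ hρ.posSemidef S

/-- The estimator `1 - (3/2)^s Ŝ^(K)` of the concentratable entanglement formed from the unitaries
and outcomes of a single round; the estimator `Ĉ` is its average over the rounds. -/
noncomputable def roundEstimator (S : Finset (Fin n)) (K : ℕ)
    (r : (S → unitaryGroup (Fin 2) ℂ) × (Fin K → S → Fin 2)) : ℝ :=
  1 - (3 / 2) ^ S.card * ShatK K r.2

theorem measurable_roundEstimator (S : Finset (Fin n)) (K : ℕ) :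
    Measurable (roundEstimator S K) :=
  (((measurable_of_finite (ShatK K)).comp measurable_snd).const_mul _).const_sub _

theorem roundEstimator_mem_Icc (r : (S → unitaryGroup (Fin 2) ℂ) × (Fin K → S → Fin 2)) :
    roundEstimator S K r ∈ Set.Icc (1 - (3 / 2 : ℝ) ^ S.card) 1 := by
  obtain ⟨h₀, h₁⟩ := ShatK_mem_Icc r.2
  exact ⟨sub_le_sub_left (mul_le_of_le_one_right (by positivity) h₁) 1,
    sub_le_self 1 (mul_nonneg (by positivity) h₀)⟩

theorem average_roundEstimator {L : ℕ} (hL : 1 ≤ L)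
    (ω : Fin L → (S → unitaryGroup (Fin 2) ℂ) × (Fin K → S → Fin 2)) :
    (∑ l, roundEstimator S K (ω l)) / Fintype.card (Fin L) =
      1 - (3 / 2 : ℝ) ^ S.card * ((1 / (L : ℝ)) * ∑ l, ShatK K (ω l).2) := by
  have hL₀ : (L : ℝ) ≠ 0 := Nat.cast_ne_zero.2 (Nat.one_le_iff_ne_zero.1 hL)
  simp only [roundEstimator, Finset.sum_sub_distrib, ← Finset.mul_sum, Finset.sum_const,
    Finset.card_univ, Fintype.card_fin, nsmul_eq_mul, mul_one]
  field_simp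

theorem integral_roundEstimator (μ : Measure (unitaryGroup (Fin 2) ℂ)) [IsProbabilityMeasure μ]
    [μ.IsMulRightInvariant] (hρ : IsDensityMatrix ρ) (S : Finset (Fin n)) (hK : 2 ≤ K) :
    ∫ r, roundEstimator S K r ∂(jointRound μ ρ S K) = CE ρ S := by
  have := isProbabilityMeasure_jointRound μ hρ S K
  simp only [roundEstimator]
  rw [integral_sub (integrable_const _) ((integrable_ShatK_snd _).const_mul _), integral_const_mul,
    integral_ShatK_jointRound μ hρ S hK, integral_const, probReal_univ, one_smul, CE, ← mul_assoc,
    ← mul_pow]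
  norm_num

end Experiment

theorem LRM_mean_estimator_general (n : ℕ) (ρ : QMat n) (hρ : IsDensityMatrix ρ)
    (S : Finset (Fin n)) (K L : ℕ) (hK : 2 ≤ K) (hL : 1 ≤ L)
    (μ : Measure (unitaryGroup (Fin 2) ℂ)) [μ.IsMulRightInvariant] [IsProbabilityMeasure μ] :
    (∫ ω : Fin L → (S → unitaryGroup (Fin 2) ℂ) × (Fin K → S → Fin 2),
        (1 - (3 / 2 : ℝ) ^ S.card * ((1 / (L : ℝ)) * ∑ l : Fin L, ShatK K (ω l).2))
        ∂(Measure.pi fun _ : Fin L => jointRound μ ρ S K)) = CE ρ S ∧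
    ∀ ε : ℝ, 0 < ε → ∀ δ : ℝ, 0 < δ →
      ⌈(9 / 4 : ℝ) ^ S.card * Real.log (2 / δ) / (2 * ε ^ 2)⌉₊ ≤ L →
      (Measure.pi fun _ : Fin L => jointRound μ ρ S K)
        {ω | ε ≤ |(1 - (3 / 2 : ℝ) ^ S.card * ((1 / (L : ℝ)) * ∑ l : Fin L, ShatK K (ω l).2))
          - CE ρ S|} ≤ ENNReal.ofReal δ := by
  have := isProbabilityMeasure_jointRound μ hρ S K
  have : Nonempty (Fin L) := ⟨⟨0, hL⟩⟩
  have hIcc := ae_of_all (jointRound μ ρ S K) (roundEstimator_mem_Icc (S := S) (K := K))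
  have hmeas := (measurable_roundEstimator S K).aemeasurable (μ := jointRound μ ρ S K)
  simp only [← average_roundEstimator hL, ← integral_roundEstimator μ hρ S hK]
  refine ⟨integral_pi_average (Integrable.of_mem_Icc _ _ hmeas hIcc), fun ε hε δ hδ hLε => ?_⟩
  have hwidth : (1 - (1 - (3 / 2 : ℝ) ^ S.card)) ^ 2 = (9 / 4) ^ S.card := by
    rw [sub_sub_cancel, ← pow_mul, mul_comm, pow_mul]
    norm_num
  refine measure_pi_abs_average_sub_integral_ge_le _ hmeas hIcc (by simp) hε hδ ?_
  rw [hwidth, Fintype.card_fin]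
  exact Nat.ceil_le.1 hLε

/-- **Unbiased CE estimation via LRM data, with a Hoeffding sample-complexity guarantee**:
the estimator `Ĉ = 1 - (3/2)^s (1/L) ∑_l Ŝ_l^{(K)}` is unbiased for `C_ψ(S)`, and for any
`ε > 0`, `δ ∈ (0,1)`, taking `L ≥ ⌈(9/4)^s log(2/δ)/(2ε²)⌉` random unitaries guarantees
`P(|Ĉ - C_ψ(S)| ≥ ε) ≤ δ`. -/
theorem LRM_mean_estimator (n : ℕ) (ψ : (Fin n → Fin 2) → ℂ)
    (hψ : (∑ x, star (ψ x) * ψ x) = 1)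
    (S : Finset (Fin n)) (hS : S.Nonempty) (K L : ℕ) (hK : 2 ≤ K) (hL : 1 ≤ L)
    (μ : Measure (Matrix.unitaryGroup (Fin 2) ℂ)) [μ.IsHaarMeasure] [IsProbabilityMeasure μ] :
    (∫ ω : Fin L → (({i : Fin n // i ∈ S} → Matrix.unitaryGroup (Fin 2) ℂ) ×
          (Fin K → ({i : Fin n // i ∈ S} → Fin 2))),
        (1 - (3 / 2 : ℝ) ^ S.card * ((1 / (L : ℝ)) * ∑ l : Fin L, ShatK K ((ω l).2)))
        ∂(Measure.pi fun _ : Fin L => jointRound μ (Matrix.vecMulVec ψ (star ψ)) S K))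
      = CE (Matrix.vecMulVec ψ (star ψ)) S ∧
    ∀ ε : ℝ, 0 < ε → ∀ δ : ℝ, 0 < δ → δ < 1 →
      ⌈(9 / 4 : ℝ) ^ S.card * Real.log (2 / δ) / (2 * ε ^ 2)⌉₊ ≤ L →
      (Measure.pi fun _ : Fin L => jointRound μ (Matrix.vecMulVec ψ (star ψ)) S K)
        {ω | ε ≤ |(1 - (3 / 2 : ℝ) ^ S.card * ((1 / (L : ℝ)) * ∑ l : Fin L, ShatK K ((ω l).2)))
          - CE (Matrix.vecMulVec ψ (star ψ)) S|}
        ≤ ENNReal.ofReal δ := by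
  have := isMulRightInvariant_of_isProbabilityMeasure μ
  have h := LRM_mean_estimator_general n _ (isDensityMatrix_vecMulVec hψ) S K L hK hL μ
  exact ⟨h.1, fun ε hε δ hδ _ => h.2 ε hε δ hδ⟩
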